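/- arXiv:1203.3282 — 7 statements merged into one kernel-verified Lean document; each statement's English description precedes it below -/
import Mathlib

section
/- Let m ≥ 1 and let C_{2^m} = { z·G_{2^m} : z ∈ U_m^{2^m} } be the linear code over U_m generated by the rows of G_{2^m}. Then the cardinality of C_{2^m} equals 2^{m·2^{m-1}} (equivalently, the rate of the code, i.e. the number of information bits per codeword divided by the code length 2^m, equals m/2). -/
open Polynomial

noncomputable section

/-- `F2` is the binary field. -/
abbrev F2 := ZMod 2

/-- `Um m` is the polynomial quotient ring `F₂[u] / (u^m)`. -/
abbrev Um (m : ℕ) := Polynomial F2 ⧸ Ideal.span {(X : Polynomial F2) ^ m}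

/-- `uu m` is the class of the variable in `Um m`. -/
def uu (m : ℕ) : Um m := Ideal.Quotient.mk _ (X : Polynomial F2)

/-- `Gmat m` is the `m`-fold Kronecker power over `Um m` of `[[1,1],[0,u]]`,
with rows and columns indexed by binary strings in `{0,1}^m`; its `(j,k)` entry
is the product over `t` of the `(j t, k t)` entries of `[[1,1],[0,u]]`. -/
def Gmat (m : ℕ) : Matrix (Fin m → Fin 2) (Fin m → Fin 2) (Um m) :=
  Matrix.of fun j k => ∏ t, (!![1, 1; 0, uu m] : Matrix (Fin 2) (Fin 2) (Um m)) (j t) (k t)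

/-! Since `[[1,1],[0,u]] = diag(1,u) * [[1,1],[0,1]]`, the Kronecker power of `[[1,1],[0,u]]` is the
diagonal matrix with entries `u ^ wt(j)` times an invertible matrix. The code is therefore in
bijection with the product of the ideals `(u ^ wt(j))`, and in `R[u]/(u^m)` the ideal `(u ^ k)` has
`|R| ^ (m - k)` elements. The exponents `m - wt(j)` add up to the number of zeros in all binary
strings of length `m`; each of the `m` positions is zero in `2 ^ (m - 1)` strings. -/

section HammingWeight

open Finset

variable {ι β : Type*} [Fintype ι]

theorem card_sub_hammingNorm [Zero β] [DecidableEq β] (j : ι → β) :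
    Fintype.card ι - hammingNorm j = #{t | j t = 0} := by
  rw [hammingNorm, ← card_univ, ← card_filter_add_card_filter_not (s := univ) (j · = 0),
    Nat.add_sub_cancel]

theorem sum_card_sub_hammingNorm [Zero β] [DecidableEq β] [DecidableEq ι] [Fintype β] :
    ∑ j : ι → β, (Fintype.card ι - hammingNorm j) =
      Fintype.card ι * Fintype.card β ^ (Fintype.card ι - 1) :=
  calc
    _ = ∑ j : ι → β, #{t | j t = 0} := sum_congr rfl fun j _ => card_sub_hammingNorm j
    _ = ∑ t, #{j : ι → β | j t = 0} := sum_card_bipartiteAbove_eq_sum_card_bipartiteBelow _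
    _ = ∑ _t : ι, Fintype.card β ^ (Fintype.card ι - 1) := sum_congr rfl fun t _ => by
      simpa using Fintype.card_filter_piFinset_const (univ : Finset β) t 0
    _ = Fintype.card ι * Fintype.card β ^ (Fintype.card ι - 1) := by simp

theorem prod_vecCons_one_eq_pow_hammingNorm {M : Type*} [CommMonoid M] (u : M)
    (j : ι → Fin 2) :
    ∏ t, ![1, u] (j t) = u ^ hammingNorm j := by
  have entry_eq (a : Fin 2) : ![1, u] a = if a ≠ 0 then u else 1 := by
    fin_cases a <;> rfl
  simp only [entry_eq, hammingNorm, prod_ite, prod_const, one_pow, mul_one]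

end HammingWeight

section KroneckerPower

open Matrix

variable {R : Type*} [CommSemiring R] (ι : Type*) [Fintype ι] {l n p : Type*}

/-- The Kronecker power of `A` with factors indexed by `ι`; its rows and columns are indexed by
functions on `ι`, so that `ι = Fin m` gives strings of length `m`. -/
def kroneckerPow (A : Matrix l n R) : Matrix (ι → l) (ι → n) R :=
  of fun j k => ∏ t, A (j t) (k t)

theorem kroneckerPow_mul [DecidableEq ι] [Fintype n] (A : Matrix l n R) (B : Matrix n p R) :
    kroneckerPow ι (A * B) = kroneckerPow ι A * kroneckerPow ι B := by
  ext j k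
  simp only [kroneckerPow, of_apply, mul_apply, Finset.prod_univ_sum, Fintype.piFinset_univ,
    Finset.prod_mul_distrib]

theorem kroneckerPow_diagonal [DecidableEq n] (d : n → R) :
    kroneckerPow ι (diagonal d) = diagonal fun j : ι → n => ∏ t, d (j t) := by
  ext j k
  rcases eq_or_ne j k with rfl | hjk
  · simp [kroneckerPow]
  · obtain ⟨t, ht⟩ := Function.ne_iff.mp hjk
    rw [diagonal_apply_ne _ hjk]
    exact Finset.prod_eq_zero (Finset.mem_univ t) (diagonal_apply_ne d ht)

theorem kroneckerPow_one [DecidableEq n] :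
    kroneckerPow ι (1 : Matrix n n R) = 1 := by
  simp [← diagonal_one, kroneckerPow_diagonal]

theorem isUnit_kroneckerPow [DecidableEq ι] [Fintype n] [DecidableEq n] {A : Matrix n n R}
    (hA : IsUnit A) : IsUnit (kroneckerPow ι A) := by
  obtain ⟨B, hAB, hBA⟩ := isUnit_iff_exists.mp hA
  refine isUnit_iff_exists.mpr ⟨kroneckerPow ι B, ?_, ?_⟩
  · rw [← kroneckerPow_mul, hAB, kroneckerPow_one]
  · rw [← kroneckerPow_mul, hBA, kroneckerPow_one]

end KroneckerPower

section RowSpace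

open Matrix

variable {S n : Type*} [CommSemiring S] [Fintype n] [DecidableEq n]

theorem range_vecMul_diagonal (d : n → S) :
    Set.range (diagonal d).vecMul = Set.univ.pi fun j => (Ideal.span {d j} : Set S) := by
  have vecMul_eq_piMap : (diagonal d).vecMul = Pi.map fun j a => a * d j := by
    ext v j
    exact vecMul_diagonal v d j
  rw [vecMul_eq_piMap, Set.range_piMap]
  congr! 2 with j
  ext x
  exact Ideal.mem_span_singleton'.symm

theorem natCard_range_vecMul_diagonal_mul (d : n → S) {P : Matrix n n S} (hP : IsUnit P) :
    Nat.card (Set.range (diagonal d * P).vecMul) = ∏ j, Nat.card (Ideal.span {d j}) := by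
  have vecMul_eq_comp : (diagonal d * P).vecMul = P.vecMul ∘ (diagonal d).vecMul :=
    funext fun v => (vecMul_vecMul v _ _).symm
  rw [vecMul_eq_comp, Set.range_comp, Nat.card_image_of_injective (vecMul_injective_of_isUnit hP),
    range_vecMul_diagonal, Nat.card_congr (Equiv.Set.univPi _), Nat.card_pi]
  rfl

theorem natCard_range_vecMul_kroneckerPow {R ι : Type*} [CommRing R] [Fintype ι]
    [DecidableEq ι] (u : R) :
    Nat.card (Set.range (kroneckerPow ι !![1, 1; 0, u]).vecMul) =
      ∏ j : ι → Fin 2, Nat.card (Ideal.span {u ^ hammingNorm j}) := by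
  have factorization : !![1, 1; 0, u] = diagonal ![1, u] * !![1, 1; 0, 1] := by
    ext a b
    fin_cases a <;> fin_cases b <;> simp
  have isUnit_unipotent : IsUnit (!![1, 1; 0, 1] : Matrix (Fin 2) (Fin 2) R) := by
    simp [isUnit_iff_isUnit_det]
  rw [factorization, kroneckerPow_mul, kroneckerPow_diagonal,
    natCard_range_vecMul_diagonal_mul _ (isUnit_kroneckerPow ι isUnit_unipotent)]
  simp only [prod_vecCons_one_eq_pow_hammingNorm]

end RowSpace

section TruncatedPolynomials

variable {R : Type*} [CommRing R]

theorem natCard_quotient_span_singleton {f : R[X]} (hf : f.Monic) :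
    Nat.card (R[X] ⧸ Ideal.span {f}) = Nat.card R ^ f.natDegree := by
  have coordinates : (R[X] ⧸ Ideal.span {f}) ≃ (Fin f.natDegree → R) :=
    (AdjoinRoot.powerBasis' hf).basis.equivFun.toEquiv
  rw [Nat.card_congr coordinates, Nat.card_fun, Nat.card_fin]

theorem natCard_quotient_span_X_pow (k : ℕ) :
    Nat.card (R[X] ⧸ Ideal.span {(X : R[X]) ^ k}) = Nat.card R ^ k := by
  rw [natCard_quotient_span_singleton (monic_X_pow k)]
  cases subsingleton_or_nontrivial R
  · simp
  · rw [natDegree_X_pow]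

theorem natCard_span_mk_X_pow [Finite R] {m k : ℕ} (hkm : k ≤ m) :
    Nat.card (Ideal.span {Ideal.Quotient.mk (Ideal.span {(X : R[X]) ^ m}) X ^ k}) =
      Nat.card R ^ (m - k) := by
  set π := Ideal.Quotient.mk (Ideal.span {(X : R[X]) ^ m})
  have span_le : Ideal.span {(X : R[X]) ^ m} ≤ Ideal.span {X ^ k} :=
    Ideal.span_singleton_le_span_singleton.mpr (pow_dvd_pow X hkm)
  have map_span : (Ideal.span {(X : R[X]) ^ k}).map π = Ideal.span {π X ^ k} := by
    rw [Ideal.map_span, Set.image_singleton, map_pow]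
  have natCard_quotient :
      Nat.card ((R[X] ⧸ Ideal.span {(X : R[X]) ^ m}) ⧸ Ideal.span {π X ^ k}) = Nat.card R ^ k := by
    rw [← map_span, Nat.card_congr (DoubleQuot.quotQuotEquivQuotOfLE span_le).toEquiv,
      natCard_quotient_span_X_pow]
  have lagrange := Submodule.card_eq_card_quotient_mul_card (Ideal.span {π X ^ k})
  rw [natCard_quotient, natCard_quotient_span_X_pow] at lagrange
  refine Nat.eq_of_mul_eq_mul_right (pow_pos (Nat.card_pos (α := R)) k) ?_
  rw [← lagrange, ← pow_add, Nat.sub_add_cancel hkm]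

end TruncatedPolynomials

theorem stmt0_general (R : Type*) [CommRing R] [Finite R] (m : ℕ) :
    Nat.card {x : (Fin m → Fin 2) → R[X] ⧸ Ideal.span {(X : R[X]) ^ m} |
        ∃ z, x = Matrix.vecMul z
          (kroneckerPow (Fin m) !![1, 1; 0, Ideal.Quotient.mk _ (X : R[X])])} =
      Nat.card R ^ (m * 2 ^ (m - 1)) := by
  set u := Ideal.Quotient.mk (Ideal.span {(X : R[X]) ^ m}) X
  have hammingNorm_le (j : Fin m → Fin 2) : hammingNorm j ≤ m := by
    simpa using hammingNorm_le_card_fintype (x := j)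
  have sum_sub_hammingNorm : ∑ j : Fin m → Fin 2, (m - hammingNorm j) = m * 2 ^ (m - 1) := by
    simpa using sum_card_sub_hammingNorm (ι := Fin m) (β := Fin 2)
  calc
    _ = Nat.card (Set.range (kroneckerPow (Fin m) !![1, 1; 0, u]).vecMul) := by
      simp only [Set.range, eq_comm]
    _ = ∏ j : Fin m → Fin 2, Nat.card (Ideal.span {u ^ hammingNorm j}) :=
      natCard_range_vecMul_kroneckerPow u
    _ = ∏ j : Fin m → Fin 2, Nat.card R ^ (m - hammingNorm j) :=
      Finset.prod_congr rfl fun j _ => natCard_span_mk_X_pow (hammingNorm_le j)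
    _ = Nat.card R ^ (m * 2 ^ (m - 1)) := by
      rw [Finset.prod_pow_eq_pow_sum, sum_sub_hammingNorm]

/-- The linear code `C_{2^m} = { z · G_{2^m} : z ∈ U_m^{2^m} }` has cardinality
`2^(m·2^(m-1))`, i.e. its rate is `m/2`. -/
theorem stmt0 (m : ℕ) (hm : 1 ≤ m) :
    Nat.card {x : (Fin m → Fin 2) → Um m |
        ∃ z : (Fin m → Fin 2) → Um m, x = Matrix.vecMul z (Gmat m)} =
      2 ^ (m * 2 ^ (m - 1)) := by
  simpa only [Nat.card_zmod] using! stmt0_general F2 m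

end
end

section
/- Let m ≥ 1. The restriction of the encoding map z ↦ z·G_{2^m} to the set of vectors z ∈ U_m^{2^m} whose component z_j is (the class of) a polynomial of degree at most m−1−w(j) for every index j ∈ {0,1}^m (so z_j = 0 when w(j) = m), where w(j) is the Hamming weight of j, is a bijection onto the code C_{2^m} = { z·G_{2^m} : z ∈ U_m^{2^m} }. In particular the codewords of C_{2^m} are in one-to-one correspondence with tuples of Σ_{q=0}^{m-1} (m−q)·C(m,q) = m·2^{m-1} information bits. -/
open Polynomial

noncomputable section

/-- `w j` is the Hamming weight of the binary string `j`. -/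
def w {m : ℕ} (j : Fin m → Fin 2) : ℕ := ∑ t, (j t : ℕ)

/-!
The Kronecker power of `[[1,1],[0,u]]` has `(j, k)` entry `u ^ w j` when `j ≤ k` coordinatewise and
`0` otherwise, so the codeword of `z` is the family of sums over lower sets of `z j * u ^ w j`.
Those sums determine their summands, hence a codeword determines exactly the products
`z j * u ^ w j`. Multiplication by `X ^ k` in `K[X] / (X ^ n)` annihilates the multiples of
`X ^ (n - k)` and nothing else, so each `z j` can be reduced to a unique representative of degree
less than `n - w j`.
-/

section LowerSums

variable {α M : Type*} [PartialOrder α] [LocallyFiniteOrderBot α]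

lemma strictMono_card_Iic : StrictMono fun a : α => (Finset.Iic a).card := fun _ b hab =>
  Finset.card_lt_card <| (Finset.ssubset_iff_of_subset (Finset.Iic_subset_Iic.2 hab.le)).2
    ⟨b, Finset.mem_Iic.2 le_rfl, fun hb => hab.not_ge (Finset.mem_Iic.1 hb)⟩

lemma sum_Iic_injective [AddCommMonoid M] [IsCancelAdd M] :
    Function.Injective fun (f : α → M) k => ∑ j ∈ Finset.Iic k, f j := by
  have : WellFoundedLT α := strictMono_card_Iic.wellFoundedLT
  intro f g h
  funext k
  induction k using WellFoundedLT.induction with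
  | ind k ih =>
    have hk : f k + ∑ j ∈ Finset.Iio k, f j = g k + ∑ j ∈ Finset.Iio k, g j := by
      simpa only [Finset.Iic_eq_cons_Iio, Finset.sum_cons] using congrFun h k
    rw [Finset.sum_congr rfl fun j hj => ih j (Finset.mem_Iio.1 hj)] at hk
    exact add_right_cancel hk

end LowerSums

section KernelPow

variable {R : Type*} [CommSemiring R] {m : ℕ}

/-- The `m`-fold Kronecker power of `[[1,1],[0,u]]` over an arbitrary commutative semiring, so that
`Gmat m` is `kernelPow m (uu m)`. -/
def kernelPow (m : ℕ) (u : R) : Matrix (Fin m → Fin 2) (Fin m → Fin 2) R :=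
  Matrix.of fun j k => ∏ t, (!![1, 1; 0, u] : Matrix (Fin 2) (Fin 2) R) (j t) (k t)

/-- The code generated by the rows of `kernelPow m u`. -/
def kernelCode (m : ℕ) (u : R) : Set ((Fin m → Fin 2) → R) :=
  {x | ∃ z, x = Matrix.vecMul z (kernelPow m u)}

lemma kernelPow_apply (u : R) (j k : Fin m → Fin 2) [Decidable (j ≤ k)] :
    kernelPow m u j k = if j ≤ k then u ^ w j else 0 := by
  have kernel_apply (a b : Fin 2) :
      (!![1, 1; 0, u] : Matrix (Fin 2) (Fin 2) R) a b = if a ≤ b then u ^ (a : ℕ) else 0 := by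
    fin_cases a <;> fin_cases b <;> simp
  simp only [kernelPow, Matrix.of_apply, kernel_apply, Finset.prod_ite_zero, Finset.mem_univ,
    true_imp_iff, Finset.prod_pow_eq_pow_sum, ← Pi.le_def]
  rfl

lemma vecMul_kernelPow_apply (u : R) (z : (Fin m → Fin 2) → R) (k : Fin m → Fin 2) :
    Matrix.vecMul z (kernelPow m u) k = ∑ j ∈ Finset.Iic k, z j * u ^ w j := by
  classical
  simp only [Matrix.vecMul, dotProduct, kernelPow_apply, mul_ite, mul_zero, ← Finset.sum_filter,
    Finset.filter_ge_eq_Iic]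

lemma vecMul_kernelPow_eq_iff [IsCancelAdd R] {u : R} {z z' : (Fin m → Fin 2) → R} :
    Matrix.vecMul z (kernelPow m u) = Matrix.vecMul z' (kernelPow m u) ↔
      ∀ j, z j * u ^ w j = z' j * u ^ w j := by
  simp only [funext_iff (f := Matrix.vecMul _ _), vecMul_kernelPow_apply]
  rw [← funext_iff, ← funext_iff]
  exact sum_Iic_injective.eq_iff

lemma bijOn_vecMul_kernelPow [IsCancelAdd R] {u : R} {T : (Fin m → Fin 2) → Set R}
    (hT : ∀ j a, ∃! b, b ∈ T j ∧ b * u ^ w j = a * u ^ w j) :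
    Set.BijOn (fun z => Matrix.vecMul z (kernelPow m u)) {z | ∀ j, z j ∈ T j}
      (kernelCode m u) := by
  refine ⟨fun z _ => ⟨z, rfl⟩, fun z hz z' hz' h => ?_, ?_⟩
  · funext j
    exact (hT j (z' j)).unique ⟨hz j, vecMul_kernelPow_eq_iff.1 h j⟩ ⟨hz' j, rfl⟩
  · rintro _ ⟨z, rfl⟩
    choose b hbT hb using fun j => (hT j (z j)).exists
    exact ⟨b, hbT, vecMul_kernelPow_eq_iff.2 hb⟩

end KernelPow

section TruncPoly

variable (K : Type*) [CommRing K]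

/-- The truncated polynomial ring `K[X] / (X ^ n)`, so that `Um m` is `TruncPoly F2 m`. -/
abbrev TruncPoly (n : ℕ) := K[X] ⧸ Ideal.span {(X : K[X]) ^ n}

/-- The classes in `K[X] / (X ^ n)` of the polynomials of degree less than `d`: the values allowed
for one component of a message. The bound is strict so that `d = 0` allows only the class of `0`. -/
def lowDegree (n d : ℕ) : Set (TruncPoly K n) :=
  {a | ∃ p : K[X], p.degree < (d : WithBot ℕ) ∧ Ideal.Quotient.mk _ p = a}

variable {K} {n : ℕ}

lemma eq_of_monic_dvd_sub {g p q : K[X]} (hg : g.Monic) (hp : p.degree < g.degree)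
    (hq : q.degree < g.degree) (h : g ∣ p - q) : p = q := by
  by_contra hne
  exact hg.not_dvd_of_degree_lt (sub_ne_zero.2 hne)
    ((degree_sub_le p q).trans_lt (max_lt hp hq)) h

-- For `k ≥ n` the exponent `n - k` truncates to `0` and both sides hold.
lemma mk_mul_mk_X_pow_eq_iff (k : ℕ) (p q : K[X]) :
    (Ideal.Quotient.mk _ p * Ideal.Quotient.mk _ X ^ k : TruncPoly K n) =
      Ideal.Quotient.mk _ q * Ideal.Quotient.mk _ X ^ k ↔ X ^ (n - k) ∣ p - q := by
  rw [← map_pow, ← map_mul, ← map_mul, Ideal.Quotient.eq, Ideal.mem_span_singleton, ← sub_mul]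
  simp only [X_pow_dvd_iff, coeff_mul_X_pow']
  refine ⟨fun h d hd => ?_, fun h d hd => ?_⟩
  · simpa using h (d + k) (by omega)
  · split_ifs with hkd
    exacts [h (d - k) (by omega), rfl]

lemma existsUnique_mem_lowDegree [Nontrivial K] (k : ℕ) (a : TruncPoly K n) :
    ∃! b, b ∈ lowDegree K n (n - k) ∧
      b * Ideal.Quotient.mk _ X ^ k = a * Ideal.Quotient.mk _ X ^ k := by
  obtain ⟨p, rfl⟩ := Ideal.Quotient.mk_surjective a
  have hX : (X ^ (n - k) : K[X]).Monic := monic_X_pow _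
  have hdeg : (p %ₘ X ^ (n - k)).degree < (X ^ (n - k) : K[X]).degree := degree_modByMonic_lt p hX
  have hdvd : X ^ (n - k) ∣ p %ₘ X ^ (n - k) - p := dvd_modByMonic_sub p _
  refine ⟨Ideal.Quotient.mk _ (p %ₘ X ^ (n - k)), ⟨⟨_, by rwa [degree_X_pow] at hdeg, rfl⟩,
    (mk_mul_mk_X_pow_eq_iff k _ p).2 hdvd⟩, ?_⟩
  rintro _ ⟨⟨q, hq, rfl⟩, hqp⟩
  rw [← degree_X_pow (R := K)] at hq
  congr 1
  refine eq_of_monic_dvd_sub hX hq hdeg ?_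
  simpa using dvd_sub ((mk_mul_mk_X_pow_eq_iff k q p).1 hqp) hdvd

lemma bijOn_mk_lowDegree [Nontrivial K] {d : ℕ} (hd : d ≤ n) :
    Set.BijOn (Ideal.Quotient.mk (Ideal.span {(X : K[X]) ^ n})) (degreeLT K d)
      (lowDegree K n d) := by
  have degree_lt {p : K[X]} (hp : p ∈ degreeLT K d) : p.degree < (X ^ n : K[X]).degree := by
    rw [degree_X_pow]
    exact (mem_degreeLT.1 hp).trans_le (mod_cast hd)
  refine ⟨fun p hp => ⟨p, mem_degreeLT.1 hp, rfl⟩, fun p hp q hq h => ?_, ?_⟩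
  · exact eq_of_monic_dvd_sub (monic_X_pow n) (degree_lt hp) (degree_lt hq)
      (Ideal.mem_span_singleton.1 (Ideal.Quotient.eq.1 h))
  · rintro _ ⟨p, hp, rfl⟩
    exact ⟨p, mem_degreeLT.2 hp, rfl⟩

lemma nonempty_pi_lowDegree_equiv [Nontrivial K] {ι : Type*} [Fintype ι] {d : ι → ℕ}
    (hd : ∀ i, d i ≤ n) :
    Nonempty ({z : ι → TruncPoly K n | ∀ i, z i ∈ lowDegree K n (d i)} ≃
      (Fin (∑ i, d i) → K)) :=
  let coeffs (i : ι) : lowDegree K n (d i) ≃ (Fin (d i) → K) :=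
    (bijOn_mk_lowDegree (hd i)).equiv.symm.trans (degreeLTEquiv K (d i)).toEquiv
  ⟨Equiv.subtypePiEquivPi.trans <| (Equiv.piCongrRight coeffs).trans <|
    (Equiv.piCurry fun _ _ => K).symm.trans <|
      (Fintype.equivFinOfCardEq (by simp)).arrowCongr (Equiv.refl K)⟩

end TruncPoly

section Weight

lemma w_eq_card {m : ℕ} (j : Fin m → Fin 2) : w j = ({t | j t = 1} : Finset (Fin m)).card := by
  rw [w, Finset.card_filter]
  refine Finset.sum_congr rfl fun t _ => ?_
  generalize j t = a
  revert a
  decide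

lemma sum_apply_w {M : Type*} [AddCommMonoid M] (m : ℕ) (f : ℕ → M) :
    ∑ j : Fin m → Fin 2, f (w j) = ∑ q ∈ Finset.range (m + 1), m.choose q • f q := by
  have sum_over_supports := Finset.sum_powerset_apply_card f (x := (Finset.univ : Finset (Fin m)))
  rw [Finset.card_fin] at sum_over_supports
  rw [← sum_over_supports]
  refine Finset.sum_bij' (fun j _ => ({t | j t = 1} : Finset (Fin m)))
    (fun s _ t => if t ∈ s then 1 else 0) (by simp) (by simp) (fun j _ => ?_) (fun s _ => ?_)
    fun j _ => by rw [w_eq_card]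
  · funext t
    have : j t = 0 ∨ j t = 1 := by omega
    rcases this with h | h <;> simp [h]
  · simp

lemma sum_sub_w (m n : ℕ) :
    ∑ j : Fin m → Fin 2, (n - w j) = ∑ q ∈ Finset.range n, (n - q) * m.choose q := by
  have eq_zero_of_length_lt (q : ℕ) (hq : q ≥ m + 1) : (n - q) * m.choose q = 0 := by
    rw [Nat.choose_eq_zero_of_lt hq, mul_zero]
  have eq_zero_of_le (q : ℕ) (hq : q ≥ n) : (n - q) * m.choose q = 0 := by
    rw [Nat.sub_eq_zero_of_le hq, zero_mul]
  simp only [sum_apply_w m (n - ·), smul_eq_mul, mul_comm (m.choose _)]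
  rw [← Finset.eventually_constant_sum eq_zero_of_length_lt (Nat.le_add_right (m + 1) n),
    Finset.eventually_constant_sum eq_zero_of_le (Nat.le_add_left n (m + 1))]

lemma sum_range_sub_mul_choose (m : ℕ) :
    ∑ q ∈ Finset.range m, (m - q) * m.choose q = m * 2 ^ (m - 1) := by
  rw [← Nat.sum_range_mul_choose, ← Finset.sum_range_reflect (fun q => q * m.choose q),
    Finset.sum_range_succ]
  simp only [Nat.add_sub_cancel, Nat.sub_self, zero_mul, add_zero]
  refine Finset.sum_congr rfl fun q hq => ?_
  rw [Nat.choose_symm (Finset.mem_range.1 hq).le]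

end Weight

theorem stmt3_general (K : Type*) [CommRing K] [Nontrivial K] (m n : ℕ) :
    Set.BijOn (fun z => Matrix.vecMul z (kernelPow m (Ideal.Quotient.mk _ X : TruncPoly K n)))
      {z | ∀ j, z j ∈ lowDegree K n (n - w j)}
      (kernelCode m (Ideal.Quotient.mk _ X : TruncPoly K n)) ∧
    Nonempty (kernelCode m (Ideal.Quotient.mk _ X : TruncPoly K n) ≃
      (Fin (∑ q ∈ Finset.range n, (n - q) * m.choose q) → K)) := by
  have hbij := bijOn_vecMul_kernelPow fun j : Fin m → Fin 2 =>
    existsUnique_mem_lowDegree (K := K) (n := n) (w j)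
  obtain ⟨e⟩ := nonempty_pi_lowDegree_equiv (K := K) fun j : Fin m → Fin 2 => Nat.sub_le n (w j)
  rw [← sum_sub_w m n]
  exact ⟨hbij, ⟨hbij.equiv.symm.trans e⟩⟩

/-- The encoding map `z ↦ z · G_{2^m}` restricted to the vectors `z` whose component `z j`
is the class of a polynomial of degree `< m - w(j)` (i.e. of degree at most `m - 1 - w(j)`,
so `z j = 0` when `w(j) = m`) is a bijection onto the code `C_{2^m}`.  In particular, the
codewords are in one-to-one correspondence with tuples of
`Σ_{q=0}^{m-1} (m-q)·C(m,q) = m·2^{m-1}` information bits. -/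
theorem stmt3 (m : ℕ) (hm : 1 ≤ m) :
    Set.BijOn (fun z => Matrix.vecMul z (Gmat m))
      {z : (Fin m → Fin 2) → Um m | ∀ j, ∃ p : Polynomial F2,
        p.degree < ((m - w j : ℕ) : WithBot ℕ) ∧
        Ideal.Quotient.mk (Ideal.span {(X : Polynomial F2) ^ m}) p = z j}
      {x : (Fin m → Fin 2) → Um m | ∃ z, x = Matrix.vecMul z (Gmat m)} ∧
    (∑ q ∈ Finset.range m, (m - q) * m.choose q) = m * 2 ^ (m - 1) ∧
    Nat.card {x : (Fin m → Fin 2) → Um m | ∃ z, x = Matrix.vecMul z (Gmat m)} =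
      2 ^ (m * 2 ^ (m - 1)) := by
  obtain ⟨hbij, ⟨e⟩⟩ := stmt3_general F2 m m
  exact ⟨hbij, sum_range_sub_mul_choose m,
    (Nat.card_congr e).trans (by simp [sum_range_sub_mul_choose])⟩

end
end

section
/- Let m ≥ 1 and let ℤ[i] be the ring of Gaussian integers. Every z ∈ ℤ[i] admits a unique representation z = Σ_{r=0}^{m-1} b_r (1+i)^r + (1+i)^m w with b_0, …, b_{m-1} ∈ {0,1} and w ∈ ℤ[i]. Equivalently, the set T_m = { Σ_{r=0}^{m-1} b_r (1+i)^r : b_r ∈ {0,1} } is a complete set of coset representatives of ℤ[i] modulo the ideal (1+i)^m ℤ[i]. -/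
noncomputable section

/-- The imaginary unit `i` of the Gaussian integers. -/
def gi : GaussianInt := ⟨0, 1⟩

/-!
Dividing with remainder by `β` replaces the tail `w` of an expansion of length `m` by
`d + β * w'`, which turns it into an expansion of length `m + 1`; existence and uniqueness of the
digit `d` carry over. For `β = 1 + i`, the multiples of `β` are the Gaussian integers whose real
and imaginary parts have the same parity, so exactly one of `z` and `z - 1` is divisible by `β`.
-/

section Expansion

variable {R : Type*}

theorem sum_mul_pow_add_pow_succ_mul [CommSemiring R] (β : R) {m : ℕ} (b : Fin (m + 1) → R)
    (w : R) :
    (∑ r, b r * β ^ (r : ℕ)) + β ^ (m + 1) * w =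
      (∑ r, Fin.init b r * β ^ (r : ℕ)) + β ^ m * (b (Fin.last m) + β * w) := by
  rw [Fin.sum_univ_castSucc]
  simp only [Fin.init, Fin.val_castSucc, Fin.val_last]
  ring

variable {β : R} {D : Set R}

theorem existsUnique_eq_add_mul [Ring R] (hβ : IsLeftRegular β) {z : R}
    (hz : ∃! d, d ∈ D ∧ β ∣ z - d) :
    ∃! p : R × R, p.1 ∈ D ∧ z = p.1 + β * p.2 := by
  obtain ⟨d, ⟨hd, w, hw⟩, d_unique⟩ := hz
  refine ⟨(d, w), ⟨hd, sub_eq_iff_eq_add'.mp hw⟩, ?_⟩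
  rintro ⟨d', w'⟩ ⟨hd', hw'⟩
  replace hw' : z - d' = β * w' := sub_eq_iff_eq_add'.mpr hw'
  obtain rfl : d' = d := d_unique d' ⟨hd', w', hw'⟩
  exact Prod.ext rfl (hβ (hw'.symm.trans hw))

theorem stmt5_general [CommRing R] (hβ : IsLeftRegular β)
    (hD : ∀ z, ∃! d, d ∈ D ∧ β ∣ z - d) (m : ℕ) (z : R) :
    ∃! p : (Fin m → R) × R,
      (∀ r, p.1 r ∈ D) ∧ z = (∑ r : Fin m, p.1 r * β ^ (r : ℕ)) + β ^ m * p.2 := by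
  induction m with
  | zero =>
    refine ⟨(Fin.elim0, z), by simp, ?_⟩
    rintro ⟨b, w⟩ ⟨-, hz⟩
    exact Prod.ext (Subsingleton.elim _ _) (by simpa using hz.symm)
  | succ m ih =>
    obtain ⟨⟨b, v⟩, ⟨hb, hz⟩, bv_unique⟩ := ih
    obtain ⟨⟨d, w⟩, ⟨hd, hv⟩, dw_unique⟩ := existsUnique_eq_add_mul hβ (hD v)
    refine ⟨(Fin.snoc b d, w), ⟨Fin.lastCases (by simpa using hd) (by simpa using hb), ?_⟩, ?_⟩
    · simp only [sum_mul_pow_add_pow_succ_mul, Fin.init_snoc, Fin.snoc_last]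
      rw [← hv]
      exact hz
    · rintro ⟨b', w'⟩ ⟨hb', hz'⟩
      rw [sum_mul_pow_add_pow_succ_mul] at hz'
      obtain ⟨h_init, h_tail⟩ := Prod.mk.inj <|
        bv_unique (Fin.init b', b' (Fin.last m) + β * w') ⟨fun r ↦ hb' r.castSucc, hz'⟩
      obtain ⟨h_last, h_quot⟩ := Prod.mk.inj <|
        dw_unique (b' (Fin.last m), w') ⟨hb' (Fin.last m), h_tail.symm⟩
      rw [← h_init, ← h_last, ← h_quot, Fin.snoc_init_self]

end Expansion

theorem one_add_gi_ne_zero : 1 + gi ≠ 0 :=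
  fun h ↦ one_ne_zero (α := ℤ) (by simpa [gi] using congrArg Zsqrtd.im h)

theorem one_add_gi_dvd_iff (z : GaussianInt) : 1 + gi ∣ z ↔ Even (z.re + z.im) := by
  constructor
  · rintro ⟨w, rfl⟩
    exact ⟨w.re, by simp [gi]⟩
  · rintro ⟨k, hk⟩
    -- `z / (1 + i) = z * (1 - i) / 2`, with real part `(z.re + z.im) / 2 = k`.
    have hre : z.re = k + (k - z.im) := by linarith
    exact ⟨⟨k, z.im - k⟩, Zsqrtd.ext (by simpa [gi] using hre) (by simp [gi])⟩

theorem existsUnique_one_add_gi_dvd_sub (z : GaussianInt) :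
    ∃! d, d ∈ ({0, 1} : Set GaussianInt) ∧ 1 + gi ∣ z - d := by
  have dvd_sub_one : 1 + gi ∣ z - 1 ↔ ¬ 1 + gi ∣ z := by
    rw [one_add_gi_dvd_iff, one_add_gi_dvd_iff, Zsqrtd.re_sub, Zsqrtd.im_sub, Zsqrtd.re_one,
      Zsqrtd.im_one, sub_zero, sub_add_eq_add_sub, Int.even_sub_one]
  by_cases h : 1 + gi ∣ z
  · refine ⟨0, by simpa using h, ?_⟩
    rintro d ⟨rfl | rfl, hd⟩
    · rfl
    · exact absurd h (dvd_sub_one.mp hd)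
  · refine ⟨1, by simpa using dvd_sub_one.mpr h, ?_⟩
    rintro d ⟨rfl | rfl, hd⟩
    · exact absurd (sub_zero z ▸ hd) h
    · rfl

/-- Every Gaussian integer `z` admits a unique representation
`z = Σ_{r=0}^{m-1} b_r (1+i)^r + (1+i)^m · w` with `b_r ∈ {0,1}` and `w ∈ ℤ[i]`;
equivalently, `T_m = { Σ b_r (1+i)^r : b_r ∈ {0,1} }` is a complete set of coset
representatives of `ℤ[i]` modulo `(1+i)^m ℤ[i]`. -/
theorem stmt5 (m : ℕ) (hm : 1 ≤ m) (z : GaussianInt) :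
    ∃! p : (Fin m → GaussianInt) × GaussianInt,
      (∀ r, p.1 r = 0 ∨ p.1 r = 1) ∧
      z = (∑ r : Fin m, p.1 r * (1 + gi) ^ (r : ℕ)) + (1 + gi) ^ m * p.2 :=
  stmt5_general (IsRegular.of_ne_zero one_add_gi_ne_zero).left existsUnique_one_add_gi_dvd_sub m z

end
end

section
/- Let m ≥ 3 be odd and define, for z ∈ ℤ[i], the map φ(z) = ϕ(z mod 2^{(m+1)/2}), where z mod 2^{(m+1)/2} denotes the Gaussian integer whose real and imaginary parts are the residues in {0,…,2^{(m+1)/2}−1} of Re z and Im z modulo 2^{(m+1)/2}, and ϕ is defined on such residues w by: ϕ(w) = w if Im w < 2^{(m-1)/2}; ϕ(w) = w + 2^{(m-1)/2}(1 − i) if Re w < 2^{(m-1)/2} and Im w ≥ 2^{(m-1)/2}; ϕ(w) = w − 2^{(m-1)/2}(1 + i) if Re w ≥ 2^{(m-1)/2} and Im w ≥ 2^{(m-1)/2}. Then for every z ∈ ℤ[i], φ(z) ≡ z modulo the ideal (1+i)^m ℤ[i]. -/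
noncomputable section

/-- Componentwise reduction of a Gaussian integer modulo `M`: the real and imaginary
parts are replaced by their residues in `{0, …, M-1}`. -/
def gmod (M : ℤ) (z : GaussianInt) : GaussianInt := ⟨z.re % M, z.im % M⟩

/-- The folding map `ϕ` with parameter `h`: it leaves `w` unchanged if `Im w < h`;
adds `h(1 - i)` if `Re w < h` and `Im w ≥ h`; subtracts `h(1 + i)` if `Re w ≥ h` and
`Im w ≥ h`. -/
def trim (h : ℤ) (w : GaussianInt) : GaussianInt :=
  if w.im < h then w
  else if w.re < h then w + (⟨h, -h⟩ : GaussianInt)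
  else w - (⟨h, h⟩ : GaussianInt)

/-!
Since `(1 + i)² = 2i` and `i` is a unit, `(1 + i) ^ (2k + 1)` is associated to `h(1 + i)` with
`h = 2 ^ k`. Each of the two operations making up `φ` preserves residue classes modulo `h(1 + i)`:
reduction changes `z` by a multiple of `2h = h(1 + i)(1 - i)`, and folding adds either `0`,
`h(1 - i) = -i · h(1 + i)` or `-h(1 + i)`.
-/

theorem gi_sq : gi ^ 2 = -1 := by
  ext <;> simp [gi, sq]

theorem isUnit_gi : IsUnit gi :=
  IsUnit.of_mul_eq_one (-gi) (by linear_combination -gi_sq)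

theorem one_add_gi_sq : (1 + gi) ^ 2 = 2 * gi := by
  linear_combination gi_sq

theorem one_add_gi_dvd_two : 1 + gi ∣ 2 :=
  ⟨1 - gi, by linear_combination gi_sq⟩

theorem associated_one_add_gi_pow_odd (k : ℕ) :
    Associated ((1 + gi) ^ (2 * k + 1)) (2 ^ k * (1 + gi)) := by
  have h_pow : (1 + gi) ^ (2 * k + 1) = 2 ^ k * (1 + gi) * gi ^ k := by
    rw [pow_succ, pow_mul, one_add_gi_sq]
    ring
  rw [h_pow]
  exact associated_mul_unit_left _ _ (isUnit_gi.pow k)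

theorem intCast_dvd_gmod_sub_self (M : ℤ) (z : GaussianInt) :
    (M : GaussianInt) ∣ gmod M z - z :=
  (Zsqrtd.intCast_dvd M _).mpr ⟨Int.dvd_emod_sub_self, Int.dvd_emod_sub_self⟩

theorem mul_one_add_gi_dvd_trim_sub_self (h : ℤ) (w : GaussianInt) :
    (h : GaussianInt) * (1 + gi) ∣ trim h w - w := by
  unfold trim
  split_ifs
  · simp
  · have h_shift : (⟨h, -h⟩ : GaussianInt) = h * (1 + gi) * -gi := by
      ext <;> simp [gi]
    rw [add_sub_cancel_left, h_shift]
    exact dvd_mul_right _ _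
  · have h_shift : (⟨h, h⟩ : GaussianInt) = h * (1 + gi) := by
      ext <;> simp [gi]
    rw [sub_sub_cancel_left, h_shift]
    exact (dvd_refl _).neg_right

theorem mul_one_add_gi_dvd_trim_gmod_sub_self (h : ℤ) (z : GaussianInt) :
    (h : GaussianInt) * (1 + gi) ∣ trim h (gmod (h * 2) z) - z := by
  have h_gmod : (h : GaussianInt) * (1 + gi) ∣ gmod (h * 2) z - z :=
    calc (h : GaussianInt) * (1 + gi) ∣ h * 2 := mul_dvd_mul_left _ one_add_gi_dvd_two
      _ = ((h * 2 : ℤ) : GaussianInt) := by push_cast; rfl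
      _ ∣ gmod (h * 2) z - z := intCast_dvd_gmod_sub_self _ _
  rw [← sub_add_sub_cancel _ (gmod (h * 2) z) z]
  exact dvd_add (mul_one_add_gi_dvd_trim_sub_self _ _) h_gmod

/-- For odd `m ≥ 3`, the map `φ(z) = ϕ(z mod 2^((m+1)/2))` (with folding parameter
`h = 2^((m-1)/2)`) satisfies `φ(z) ≡ z` modulo the ideal `(1+i)^m ℤ[i]`. -/
theorem stmt8 (m : ℕ) (hm : 3 ≤ m) (hodd : Odd m) (z : GaussianInt) :
    (1 + gi) ^ m ∣ trim (2 ^ ((m - 1) / 2)) (gmod (2 ^ ((m + 1) / 2)) z) - z := by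
  obtain ⟨k, rfl⟩ := hodd
  have h_fold : (2 * k + 1 - 1) / 2 = k := by omega
  have h_mod : (2 * k + 1 + 1) / 2 = k + 1 := by omega
  rw [h_fold, h_mod, pow_succ (2 : ℤ), (associated_one_add_gi_pow_odd k).dvd_iff_dvd_left]
  simpa only [Int.cast_pow, Int.cast_ofNat] using
    mul_one_add_gi_dvd_trim_gmod_sub_self (2 ^ k) z

end
end

section
/- Let m ≥ 3 be odd. The map χ : U_m → ℤ[i] given by χ(x) = ϕ(Φ(x) mod 2^{(m+1)/2}) is injective, where Φ(Σ_{j=0}^{m-1} b_j u^j) = Σ_{j=0}^{m-1} ψ(b_j)(1+i)^j with ψ(0)=0, ψ(1)=1; w mod 2^{(m+1)/2} denotes the Gaussian integer whose real and imaginary parts are the residues in {0,…,2^{(m+1)/2}−1} of Re w and Im w modulo 2^{(m+1)/2}; and ϕ is defined on such residues w by: ϕ(w) = w if Im w < 2^{(m-1)/2}; ϕ(w) = w + 2^{(m-1)/2}(1 − i) if Re w < 2^{(m-1)/2} and Im w ≥ 2^{(m-1)/2}; ϕ(w) = w − 2^{(m-1)/2}(1 + i) if Re w ≥ 2^{(m-1)/2}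 and Im w ≥ 2^{(m-1)/2}. -/
noncomputable section

/-!
Both steps of `χ` preserve the residue class modulo `2 ^ k * (1 + i)`, where `m = 2 * k + 1`:
reducing the coordinates changes `z` by a multiple of `2 ^ (k + 1)`, and folding moves it by
`0` or by `2 ^ k` times an associate of `1 + i`. As `(1 + i) ^ 2 = 2 * i`, this modulus is an
associate of `(1 + i) ^ m`, so `χ` determines `Φ(x)` modulo `(1 + i) ^ m`; since `1 + i` is not a
unit, the digits `0` and `1` are incongruent modulo `1 + i` and can be read off successively.
-/

section Digits

variable {R : Type*}

theorem sum_mul_pow_succ [CommSemiring R] (p : R) {n : ℕ} (b : Fin (n + 1) → R) :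
    ∑ r, b r * p ^ (r : ℕ) = b 0 + p * ∑ r : Fin n, b r.succ * p ^ (r : ℕ) := by
  simp [Fin.sum_univ_succ, Finset.mul_sum, pow_succ', mul_left_comm]

variable [CommRing R] {p : R}

theorem eq_of_pow_dvd_sum_sub_sum (hp : IsLeftRegular p) {D : Set R}
    (hD : D.Pairwise fun d d' ↦ ¬ p ∣ d - d') {n : ℕ} {b b' : Fin n → R}
    (hb : ∀ r, b r ∈ D) (hb' : ∀ r, b' r ∈ D)
    (h : p ^ n ∣ ∑ r, b r * p ^ (r : ℕ) - ∑ r, b' r * p ^ (r : ℕ)) :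
    b = b' := by
  induction n with
  | zero => exact Subsingleton.elim b b'
  | succ n ih =>
    rw [sum_mul_pow_succ, sum_mul_pow_succ, add_sub_add_comm, ← mul_sub] at h
    have head_dvd : p ∣ b 0 - b' 0 :=
      (dvd_add_left (dvd_mul_right p _)).mp ((dvd_pow_self p n.succ_ne_zero).trans h)
    have head_eq : b 0 = b' 0 := hD.eq (hb 0) (hb' 0) (not_not.mpr head_dvd)
    rw [head_eq, sub_self, zero_add, pow_succ'] at h
    have tail_eq : (fun r : Fin n ↦ b r.succ) = fun r ↦ b' r.succ :=
      ih (fun r ↦ hb r.succ) (fun r ↦ hb' r.succ) (hp.dvd_cancel_left.mp h)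
    exact funext (Fin.cases head_eq (congrFun tail_eq))

theorem pairwise_zero_one_not_dvd_sub (hp : ¬ IsUnit p) :
    ({0, 1} : Set R).Pairwise fun d d' ↦ ¬ p ∣ d - d' := by
  have not_dvd_one : ¬ p ∣ 1 := mt isUnit_iff_dvd_one.mpr hp
  simp [Set.pairwise_pair, not_dvd_one]

end Digits

theorem not_isUnit_one_add_gi : ¬ IsUnit (1 + gi) := by
  rw [← Zsqrtd.norm_eq_one_iff]
  simp [gi, Zsqrtd.norm_def]

theorem associated_two_one_add_gi_sq : Associated 2 ((1 + gi) ^ 2) := by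
  rw [one_add_gi_sq]
  exact associated_mul_unit_right 2 gi isUnit_gi

theorem associated_two_pow_mul_one_add_gi (k : ℕ) :
    Associated (2 ^ k * (1 + gi)) ((1 + gi) ^ (2 * k + 1)) := by
  rw [pow_succ, pow_mul]
  exact associated_two_one_add_gi_sq.pow_pow.mul_right (1 + gi)

theorem intCast_dvd_sub_gmod (M : ℤ) (z : GaussianInt) : (M : GaussianInt) ∣ z - gmod M z := by
  rw [Zsqrtd.intCast_dvd]
  exact ⟨Int.dvd_self_sub_emod, Int.dvd_self_sub_emod⟩

theorem mul_one_add_gi_dvd_sub_trim (H : ℤ) (w : GaussianInt) :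
    (H : GaussianInt) * (1 + gi) ∣ w - trim H w := by
  unfold trim
  split_ifs
  · simp
  · exact ⟨gi, by ext <;> simp [gi]⟩
  · exact ⟨1, by ext <;> simp [gi]⟩

theorem mul_one_add_gi_dvd_sub_trim_gmod (H : ℤ) (z : GaussianInt) :
    (H : GaussianInt) * (1 + gi) ∣ z - trim H (gmod (H * 2) z) := by
  have one_add_gi_dvd_two : 1 + gi ∣ 2 :=
    (dvd_pow_self _ two_ne_zero).trans associated_two_one_add_gi_sq.dvd'
  have dvd_sub_gmod : (H : GaussianInt) * (1 + gi) ∣ z - gmod (H * 2) z :=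
    (mul_dvd_mul_left _ one_add_gi_dvd_two).trans
      (by simpa using intCast_dvd_sub_gmod (H * 2) z)
  simpa using dvd_add dvd_sub_gmod (mul_one_add_gi_dvd_sub_trim H (gmod (H * 2) z))

theorem mul_one_add_gi_dvd_sub_of_trim_gmod_eq {H : ℤ} {z z' : GaussianInt}
    (h : trim H (gmod (H * 2) z) = trim H (gmod (H * 2) z')) :
    (H : GaussianInt) * (1 + gi) ∣ z - z' := by
  simpa [h] using
    dvd_sub (mul_one_add_gi_dvd_sub_trim_gmod H z) (mul_one_add_gi_dvd_sub_trim_gmod H z')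

/-- For odd `m ≥ 3`, the map `χ(x) = ϕ(Φ(x) mod 2^((m+1)/2))` on `U_m` is injective:
elements of `U_m` correspond to coefficient tuples `b ∈ {0,1}^m` via
`Φ(x) = Σ_{r<m} b_r (1+i)^r`, and equal values of `χ` force equal tuples. -/
theorem stmt10 (m : ℕ) (hm : 3 ≤ m) (hodd : Odd m)
    (b b' : Fin m → GaussianInt)
    (hb : ∀ r, b r = 0 ∨ b r = 1) (hb' : ∀ r, b' r = 0 ∨ b' r = 1)
    (h : trim (2 ^ ((m - 1) / 2))
          (gmod (2 ^ ((m + 1) / 2)) (∑ r : Fin m, b r * (1 + gi) ^ (r : ℕ))) =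
        trim (2 ^ ((m - 1) / 2))
          (gmod (2 ^ ((m + 1) / 2)) (∑ r : Fin m, b' r * (1 + gi) ^ (r : ℕ)))) :
    b = b' := by
  obtain ⟨k, rfl⟩ := hodd
  have half_pred : (2 * k + 1 - 1) / 2 = k := by omega
  have half_succ : (2 * k + 1 + 1) / 2 = k + 1 := by omega
  rw [half_pred, half_succ, pow_succ] at h
  have pow_dvd : (1 + gi) ^ (2 * k + 1) ∣
      ∑ r, b r * (1 + gi) ^ (r : ℕ) - ∑ r, b' r * (1 + gi) ^ (r : ℕ) :=
    (associated_two_pow_mul_one_add_gi k).dvd'.trans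
      (by simpa using mul_one_add_gi_dvd_sub_of_trim_gmod_eq h)
  exact eq_of_pow_dvd_sum_sub_sum (IsRegular.of_ne_zero one_add_gi_ne_zero).left
    (pairwise_zero_one_not_dvd_sub not_isUnit_one_add_gi) hb hb' pow_dvd

end
end

section
/- Let m ≥ 1 and n = 2^m. The Construction A′ lattice { (1+i)^m a + Φ(c) : a ∈ ℤ[i]^n, c ∈ C_{2^m} }, where Φ is applied componentwise, equals the Construction D Barnes–Wall lattice { (1+i)^m a + Σ_{r=0}^{m-1} (1+i)^r ψ(c_r) : a ∈ ℤ[i]^n, c_r ∈ RM(r,m) for 0 ≤ r ≤ m−1 }, where ψ : F₂ → ℤ[i] with ψ(0)=0, ψ(1)=1 is applied componentwise. -/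
open Polynomial

noncomputable section

/-- The linear code `C_{2^m} = { z · G_{2^m} : z ∈ U_m^{2^m} }`. -/
def Code (m : ℕ) : Set ((Fin m → Fin 2) → Um m) :=
  {c | ∃ z, c = Matrix.vecMul z (Gmat m)}

/-- `Bmat m` is the `m`-fold Kronecker power over `F₂` of `[[1,1],[0,1]]`. -/
def Bmat (m : ℕ) : Matrix (Fin m → Fin 2) (Fin m → Fin 2) F2 :=
  Matrix.of fun j k => ∏ t, (!![1, 1; 0, 1] : Matrix (Fin 2) (Fin 2) F2) (j t) (k t)

/-- The Reed–Muller code `RM(r,m)`: the `F₂`-span of the rows of `Bmat m` whose row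
index has Hamming weight at most `r`. -/
def RM (m r : ℕ) : Submodule F2 ((Fin m → Fin 2) → F2) :=
  Submodule.span F2 ((fun j => Bmat m j) '' {j | w j ≤ r})

/-- `psiG` sends `0 ↦ 0` and `1 ↦ 1` from `F₂` to `ℤ[i]`. -/
def psiG (b : F2) : GaussianInt := (b.val : GaussianInt)

/-!
Since `[[1, 1], [0, u]] = diag(1, u) * [[1, 1], [0, 1]]`, row `j` of `G_{2^m}` is `u ^ w j` times
row `j` of the binary Kronecker power. Hence the `u`-adic digits of a codeword of `C_{2^m}` are
linear combinations of rows of weight at most the digit's index, and conversely every sequence of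
such combinations occurs: these are exactly the sequences with `c_r ∈ RM(r, m)`. Evaluating digits
with `ψ` at `1 + i` instead of `u` then turns one lattice description into the other.
-/

section ReesSpan

variable {R ι κ : Type*} [Semiring R]

/-- The `R[X]`-span of the vectors `X ^ d j • b j`. It is the Rees module of the increasing
filtration `r ↦ span {b j | d j ≤ r}`, realised inside vectors of polynomials. -/
def reesSpan (b : ι → κ → R) (d : ι → ℕ) : Submodule R[X] (κ → R[X]) :=
  Submodule.span R[X] (Set.range fun j k => monomial (d j) (b j k))

variable {b : ι → κ → R} {d : ι → ℕ}

lemma coeff_mem_span_of_mem_reesSpan {p : κ → R[X]} (hp : p ∈ reesSpan b d) (r : ℕ) :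
    (fun k => (p k).coeff r) ∈ Submodule.span R (b '' {j | d j ≤ r}) := by
  induction hp using Submodule.span_induction generalizing r with
  | mem p hp =>
    obtain ⟨j, rfl⟩ := hp
    by_cases hj : d j = r
    · simp only [hj, coeff_monomial_same]
      exact Submodule.subset_span (Set.mem_image_of_mem b hj.le)
    · simp only [coeff_monomial_of_ne _ (Ne.symm hj)]
      exact Submodule.zero_mem _
  | zero => exact Submodule.zero_mem _
  | add p q _ _ hp hq =>
    simp only [Pi.add_apply, coeff_add]
    exact add_mem (hp r) (hq r)
  | smul q p _ hp =>
    have hcoeff : (fun k => ((q • p) k).coeff r) =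
        ∑ x ∈ Finset.HasAntidiagonal.antidiagonal r, q.coeff x.1 • fun k => (p k).coeff x.2 := by
      ext k
      simp only [Pi.smul_apply, smul_eq_mul, coeff_mul, Finset.sum_apply]
    rw [hcoeff]
    refine sum_mem fun x hx => Submodule.smul_mem _ _ ?_
    have hxr : x.2 ≤ r := Finset.HasAntidiagonal.antidiagonal.snd_le hx
    exact Submodule.span_mono (Set.image_mono fun j hj => le_trans hj hxr) (hp x.2)

lemma monomial_mem_reesSpan {r : ℕ} {c : κ → R}
    (hc : c ∈ Submodule.span R (b '' {j | d j ≤ r})) :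
    (fun k => monomial r (c k)) ∈ reesSpan b d := by
  suffices h : Submodule.span R (b '' {j | d j ≤ r}) ≤
      ((reesSpan b d).restrictScalars R).comap ((monomial r).compLeft κ) from h hc
  rw [Submodule.span_le]
  rintro _ ⟨j, hj, rfl⟩
  have hshift : (fun k => monomial r (b j k)) =
      (X : R[X]) ^ (r - d j) • fun k => monomial (d j) (b j k) := by
    ext1 k
    simp only [Pi.smul_apply, smul_eq_mul, X_pow_mul_monomial, Nat.add_sub_cancel' hj]
  change (fun k => monomial r (b j k)) ∈ reesSpan b d
  rw [hshift]
  exact Submodule.smul_mem _ _ (Submodule.subset_span ⟨j, rfl⟩)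

end ReesSpan

lemma mk_ofFn_toFn {R : Type*} [CommRing R] [DecidableEq R] (m : ℕ) (p : R[X]) :
    Ideal.Quotient.mk (Ideal.span {(X : R[X]) ^ m}) (ofFn m (toFn m p)) =
      Ideal.Quotient.mk (Ideal.span {(X : R[X]) ^ m}) p := by
  rw [Ideal.Quotient.eq, Ideal.mem_span_singleton, X_pow_dvd_iff]
  intro r hr
  rw [coeff_sub, ofFn_coeff_eq_val_of_lt _ hr, sub_eq_zero]
  rfl

lemma Gmat_eq_map_monomial (m : ℕ) :
    Gmat m = (Matrix.of fun j k => monomial (w j) (Bmat m j k)).map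
      (Ideal.Quotient.mk (Ideal.span {(X : F2[X]) ^ m})) := by
  have hfactor (a b : Fin 2) : (!![1, 1; 0, uu m] : Matrix (Fin 2) (Fin 2) (Um m)) a b =
      Ideal.Quotient.mk _ (C ((!![1, 1; 0, 1] : Matrix (Fin 2) (Fin 2) F2) a b) * X ^ (a : ℕ)) := by
    fin_cases a <;> fin_cases b <;> simp [uu]
  ext j k
  simp only [Gmat, Bmat, w, Matrix.of_apply, Matrix.map_apply, hfactor,
    ← C_mul_X_pow_eq_monomial, map_prod, Finset.prod_mul_distrib, Finset.prod_pow_eq_pow_sum,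
    map_mul, map_pow]

section Code

variable {m : ℕ} {c : (Fin m → Fin 2) → Um m}

lemma mem_Code_iff_exists_mem_reesSpan :
    c ∈ Code m ↔ ∃ p ∈ reesSpan (Bmat m) w, c = fun k => Ideal.Quotient.mk _ (p k) := by
  let M := Matrix.of fun j k => monomial (w j) (Bmat m j k)
  have hrows : reesSpan (Bmat m) w = LinearMap.range M.vecMulLinear :=
    (range_vecMulLinear M).symm
  have hvecMul (y : (Fin m → Fin 2) → F2[X]) :
      Matrix.vecMul (fun j => Ideal.Quotient.mk _ (y j)) (Gmat m) =
        fun k => Ideal.Quotient.mk _ (Matrix.vecMul y M k) := by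
    ext1 k
    rw [Gmat_eq_map_monomial]
    exact (RingHom.map_vecMul _ M y k).symm
  rw [hrows]
  constructor
  · rintro ⟨z, rfl⟩
    choose y hy using fun j => Ideal.Quotient.mk_surjective (z j)
    obtain rfl : (fun j => Ideal.Quotient.mk _ (y j)) = z := funext hy
    exact ⟨_, ⟨y, rfl⟩, hvecMul y⟩
  · rintro ⟨_, ⟨y, rfl⟩, rfl⟩
    exact ⟨_, (hvecMul y).symm⟩

theorem mem_Code_iff_exists_digits_mem_RM :
    c ∈ Code m ↔ ∃ d : Fin m → ((Fin m → Fin 2) → F2), (∀ r : Fin m, d r ∈ RM m r) ∧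
      c = fun k => Ideal.Quotient.mk _ (ofFn m fun r => d r k) := by
  rw [mem_Code_iff_exists_mem_reesSpan]
  constructor
  · rintro ⟨p, hp, rfl⟩
    exact ⟨fun r k => (p k).coeff r, fun r => coeff_mem_span_of_mem_reesSpan hp r,
      funext fun k => (mk_ofFn_toFn m (p k)).symm⟩
  · rintro ⟨d, hd, rfl⟩
    have hexpand : (fun k => ofFn m fun r => d r k) =
        ∑ r : Fin m, fun k => monomial (r : ℕ) (d r k) := by
      ext1 k
      rw [ofFn_eq_sum_monomial, Finset.sum_apply]
    refine ⟨_, ?_, rfl⟩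
    rw [hexpand]
    exact sum_mem fun r _ => monomial_mem_reesSpan (hd r)

end Code

theorem stmt12_general {A : Type*} [CommSemiring A] (m : ℕ) (ψ : F2 → A) (π : A) (Φ : Um m → A)
    (hΦ : ∀ p : F2[X], p.degree < (m : WithBot ℕ) →
      Φ (Ideal.Quotient.mk (Ideal.span {(X : F2[X]) ^ m}) p) =
        ∑ j ∈ Finset.range m, ψ (p.coeff j) * π ^ j) :
    {v : (Fin m → Fin 2) → A | ∃ a : (Fin m → Fin 2) → A, ∃ c ∈ Code m,
        v = fun k => π ^ m * a k + Φ (c k)} =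
      {v : (Fin m → Fin 2) → A | ∃ a : (Fin m → Fin 2) → A,
        ∃ c : Fin m → ((Fin m → Fin 2) → F2), (∀ r : Fin m, c r ∈ RM m (r : ℕ)) ∧
          v = fun k => π ^ m * a k + ∑ r : Fin m, π ^ (r : ℕ) * ψ (c r k)} := by
  have hdigits (d : Fin m → F2) :
      Φ (Ideal.Quotient.mk _ (ofFn m d)) = ∑ r : Fin m, π ^ (r : ℕ) * ψ (d r) := by
    simp only [hΦ _ (ofFn_degree_lt d), Finset.sum_range, Fin.is_lt, ofFn_coeff_eq_val_of_lt,
      Fin.eta, mul_comm]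
  ext v
  simp only [Set.mem_ofPred_eq, mem_Code_iff_exists_digits_mem_RM]
  constructor
  · rintro ⟨a, _, ⟨d, hd, rfl⟩, rfl⟩
    exact ⟨a, d, hd, by simp only [hdigits]⟩
  · rintro ⟨a, d, hd, rfl⟩
    exact ⟨a, _, ⟨d, hd, rfl⟩, by simp only [hdigits]⟩

/-- The Construction A′ lattice `{ (1+i)^m a + Φ(c) : a ∈ ℤ[i]^n, c ∈ C_{2^m} }`
coincides with the Construction D Barnes–Wall lattice
`{ (1+i)^m a + Σ_{r=0}^{m-1} (1+i)^r ψ(c_r) : a ∈ ℤ[i]^n, c_r ∈ RM(r,m) }`. -/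
theorem stmt12 (m : ℕ) (hm : 1 ≤ m)
    (Φ : Um m → GaussianInt)
    (hΦ : ∀ p : Polynomial F2, p.degree < (m : WithBot ℕ) →
      Φ (Ideal.Quotient.mk (Ideal.span {(X : Polynomial F2) ^ m}) p) =
        ∑ j ∈ Finset.range m, psiG (p.coeff j) * (1 + gi) ^ j) :
    {v : (Fin m → Fin 2) → GaussianInt |
        ∃ a : (Fin m → Fin 2) → GaussianInt, ∃ c ∈ Code m,
          v = fun k => (1 + gi) ^ m * a k + Φ (c k)} =
      {v : (Fin m → Fin 2) → GaussianInt |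
        ∃ a : (Fin m → Fin 2) → GaussianInt,
        ∃ c : Fin m → ((Fin m → Fin 2) → F2),
          (∀ r : Fin m, c r ∈ RM m (r : ℕ)) ∧
          v = fun k => (1 + gi) ^ m * a k +
            ∑ r : Fin m, (1 + gi) ^ (r : ℕ) * psiG (c r k)} := by
  exact stmt12_general m psiG (1 + gi) Φ hΦ

end
end

section
/- Let σ > 0 and let μ be the product of two copies of the Gaussian measure on ℝ with mean 0 and variance σ²/2. Then the probability under μ that ⌈X⌋ + ⌈Y⌋ is odd (i.e. the cross-over probability P_c of the virtual binary channel induced by the round-modulo operation) satisfies P_c ≤ Σ_{a∈ℤ} exp( −(2a + 1/2)²/σ² ). -/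
open MeasureTheory ProbabilityTheory

noncomputable section

/-!
If `⌈X⌋ + ⌈Y⌋` is odd then one of `X`, `Y` does not round to `0`, so `X² + Y² ≥ 1/4`. Lebesgue
measure on the plane is pushed forward by the squared radius to `π` times Lebesgue measure on the
half-line, so `X² + Y²` is exponential with rate `1/σ²` and the event has probability at most
`exp (-(1/4)/σ²)`, which is the term `a = 0` of the sum.
-/

open Set
open scoped ENNReal NNReal

section Round

variable {α : Type*} [Field α] [LinearOrder α] [IsStrictOrderedRing α] [FloorRing α]

lemma half_le_abs_of_round_ne_zero {x : α} (hx : round x ≠ 0) : 1 / 2 ≤ |x| := by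
  contrapose! hx
  exact round_eq_zero_iff.2 ⟨(abs_lt.1 hx).1.le, (abs_lt.1 hx).2⟩

lemma one_fourth_le_sq_of_round_ne_zero {x : α} (hx : round x ≠ 0) : 1 / 4 ≤ x ^ 2 :=
  calc (1 / 4 : α) = (1 / 2) ^ 2 := by norm_num
    _ ≤ |x| ^ 2 := by gcongr; exact half_le_abs_of_round_ne_zero hx
    _ = x ^ 2 := sq_abs x

lemma one_fourth_le_sq_add_sq_of_odd_round_add {x y : α} (h : Odd (round x + round y)) :
    1 / 4 ≤ x ^ 2 + y ^ 2 := by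
  by_cases hx : round x = 0
  · have hy : round y ≠ 0 := fun hy ↦ by simp [hx, hy] at h
    linarith [one_fourth_le_sq_of_round_ne_zero hy, sq_nonneg x]
  · linarith [one_fourth_le_sq_of_round_ne_zero hx, sq_nonneg y]

end Round

lemma lintegral_Ioi_two_mul_comp_sq (f : ℝ → ℝ≥0∞) :
    ∫⁻ r in Ioi 0, ENNReal.ofReal (2 * r) * f (r ^ 2) = ∫⁻ s in Ioi 0, f s := by
  have himage : (fun r : ℝ ↦ r ^ 2) '' Ioi 0 = Ioi 0 := by
    ext s
    constructor
    · rintro ⟨r, hr, rfl⟩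
      exact pow_pos (mem_Ioi.1 hr) 2
    · exact fun hs ↦ ⟨√s, Real.sqrt_pos.2 hs, Real.sq_sqrt (le_of_lt hs)⟩
  have hderiv (r : ℝ) : HasDerivAt (fun r : ℝ ↦ r ^ 2) (2 * r) r := by
    simpa using hasDerivAt_pow 2 r
  have hmono : MonotoneOn (fun r : ℝ ↦ r ^ 2) (Ioi 0) :=
    fun r hr _ _ hrs ↦ pow_le_pow_left₀ (le_of_lt hr) hrs 2
  rw [← lintegral_image_eq_lintegral_deriv_mul_of_monotoneOn measurableSet_Ioi
    (fun r _ ↦ (hderiv r).hasDerivWithinAt) hmono, himage]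

lemma lintegral_comp_sq_add_sq {f : ℝ → ℝ≥0∞} (hf : Measurable f) :
    ∫⁻ p : ℝ × ℝ, f (p.1 ^ 2 + p.2 ^ 2) = ENNReal.ofReal Real.pi * ∫⁻ s in Ioi 0, f s := by
  have hradius (r θ : ℝ) : (r * Real.cos θ) ^ 2 + (r * Real.sin θ) ^ 2 = r ^ 2 := by
    linear_combination r ^ 2 * Real.cos_sq_add_sin_sq θ
  calc
    _ = ∫⁻ p in Ioi 0 ×ˢ Ioo (-Real.pi) Real.pi, ENNReal.ofReal p.1 * f (p.1 ^ 2) * 1 := by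
      simp only [← lintegral_comp_polarCoord_symm, polarCoord_symm_apply, polarCoord_target,
        hradius, smul_eq_mul, mul_one]
    _ = (∫⁻ r in Ioi 0, ENNReal.ofReal r * f (r ^ 2)) *
          ∫⁻ _ in Ioo (-Real.pi) Real.pi, 1 := by
      rw [Measure.volume_eq_prod, ← Measure.prod_restrict]
      exact lintegral_prod_mul (f := fun r ↦ ENNReal.ofReal r * f (r ^ 2)) (by fun_prop)
        aemeasurable_const
    _ = ENNReal.ofReal Real.pi * ∫⁻ r in Ioi 0, ENNReal.ofReal (2 * r) * f (r ^ 2) := by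
      have hangle : ENNReal.ofReal (Real.pi - -Real.pi) = ENNReal.ofReal Real.pi * 2 := by
        rw [sub_neg_eq_add, ← mul_two, ENNReal.ofReal_mul Real.pi_nonneg, ENNReal.ofReal_ofNat]
      simp only [ENNReal.ofReal_mul zero_le_two, ENNReal.ofReal_ofNat, mul_assoc]
      rw [lintegral_const_mul _ (by fun_prop), setLIntegral_one, Real.volume_Ioo, hangle, mul_comm,
        mul_assoc]
    _ = _ := by rw [lintegral_Ioi_two_mul_comp_sq]

lemma gaussianPDF_zero_mul_gaussianPDF_zero (v : ℝ≥0) (x y : ℝ) :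
    gaussianPDF 0 v x * gaussianPDF 0 v y =
      ENNReal.ofReal Real.pi⁻¹ * exponentialPDF (2 * (v : ℝ))⁻¹ (x ^ 2 + y ^ 2) := by
  rw [exponentialPDF_of_nonneg (by positivity), gaussianPDF, gaussianPDF,
    ← ENNReal.ofReal_mul (gaussianPDFReal_nonneg _ _ _), ← ENNReal.ofReal_mul (by positivity)]
  congr 1
  calc gaussianPDFReal 0 v x * gaussianPDFReal 0 v y
    _ = (√(2 * Real.pi * v) * √(2 * Real.pi * v))⁻¹ *
          Real.exp (-(x - 0) ^ 2 / (2 * v) + -(y - 0) ^ 2 / (2 * v)) := by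
      rw [gaussianPDFReal, gaussianPDFReal, Real.exp_add, mul_inv, mul_mul_mul_comm]
    _ = Real.pi⁻¹ * ((2 * (v : ℝ))⁻¹ * Real.exp (-((2 * (v : ℝ))⁻¹ * (x ^ 2 + y ^ 2)))) := by
      rw [Real.mul_self_sqrt (by positivity)]
      ring_nf

theorem gaussianReal_prod_map_sq_add_sq {v : ℝ≥0} (hv : v ≠ 0) :
    ((gaussianReal 0 v).prod (gaussianReal 0 v)).map (fun p ↦ p.1 ^ 2 + p.2 ^ 2) =
      expMeasure (2 * (v : ℝ))⁻¹ := by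
  have hpdf : Measurable (exponentialPDF (2 * (v : ℝ))⁻¹) :=
    (measurable_exponentialPDFReal _).ennreal_ofReal
  refine Measure.ext_of_lintegral _ fun f hf ↦ ?_
  rw [lintegral_map hf (by fun_prop), gaussianReal_of_var_ne_zero _ hv,
    prod_withDensity (by fun_prop) (by fun_prop),
    lintegral_withDensity_eq_lintegral_mul _ (by fun_prop) (by fun_prop)]
  calc
    _ = ∫⁻ p : ℝ × ℝ, ENNReal.ofReal Real.pi⁻¹ *
          (exponentialPDF (2 * (v : ℝ))⁻¹ * f) (p.1 ^ 2 + p.2 ^ 2) := by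
      simp only [Pi.mul_apply, gaussianPDF_zero_mul_gaussianPDF_zero, mul_assoc,
        Measure.volume_eq_prod]
    _ = ∫⁻ s in Ioi 0, (exponentialPDF (2 * (v : ℝ))⁻¹ * f) s := by
      rw [lintegral_const_mul _ (by fun_prop), lintegral_comp_sq_add_sq (by fun_prop), ← mul_assoc,
        ← ENNReal.ofReal_mul (by positivity), inv_mul_cancel₀ Real.pi_ne_zero, ENNReal.ofReal_one,
        one_mul]
    _ = ∫⁻ s, (exponentialPDF (2 * (v : ℝ))⁻¹ * f) s := by
      rw [setLIntegral_congr Ioi_ae_eq_Ici]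
      refine setLIntegral_eq_of_support_subset fun s hs ↦ ?_
      contrapose! hs
      simp [exponentialPDF_of_neg (not_le.1 hs)]
    _ = ∫⁻ s, f s ∂expMeasure (2 * (v : ℝ))⁻¹ :=
      (lintegral_withDensity_eq_lintegral_mul _ hpdf hf).symm

lemma expMeasure_real_Ici {r t : ℝ} (hr : 0 < r) (ht : 0 ≤ t) :
    (expMeasure r).real (Ici t) = Real.exp (-(r * t)) := by
  have hprob := isProbabilityMeasure_expMeasure hr
  have hsingleton : NullSingletonClass (expMeasure r) := by
    unfold expMeasure gammaMeasure
    infer_instance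
  calc (expMeasure r).real (Ici t)
    _ = (expMeasure r).real (Iic t)ᶜ := by rw [compl_Iic, measureReal_congr Ioi_ae_eq_Ici]
    _ = 1 - cdf (expMeasure r) t := by
      rw [probReal_compl_eq_one_sub measurableSet_Iic, cdf_eq_real]
    _ = Real.exp (-(r * t)) := by rw [cdf_expMeasure_eq hr, if_pos ht, sub_sub_cancel]

lemma gaussianReal_prod_real_le_sq_add_sq {v : ℝ≥0} (hv : v ≠ 0) {t : ℝ} (ht : 0 ≤ t) :
    ((gaussianReal 0 v).prod (gaussianReal 0 v)).real {p | t ≤ p.1 ^ 2 + p.2 ^ 2} =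
      Real.exp (-t / (2 * v)) := by
  have hrate : 0 < (2 * (v : ℝ))⁻¹ := by positivity
  calc
    _ = (expMeasure (2 * (v : ℝ))⁻¹).real (Ici t) := by
      rw [← gaussianReal_prod_map_sq_add_sq hv,
        map_measureReal_apply (by fun_prop) measurableSet_Ici]
      rfl
    _ = Real.exp (-t / (2 * v)) := by
      rw [expMeasure_real_Ici hrate ht, neg_div, div_eq_inv_mul]

lemma gaussianReal_prod_real_odd_round_add_le {v : ℝ≥0} (hv : v ≠ 0) :
    ((gaussianReal 0 v).prod (gaussianReal 0 v)).real {p | Odd (round p.1 + round p.2)} ≤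
      Real.exp (-(1 / 4) / (2 * v)) := by
  rw [← gaussianReal_prod_real_le_sq_add_sq hv (by norm_num)]
  exact measureReal_mono fun p ↦ one_fourth_le_sq_add_sq_of_odd_round_add

lemma summable_exp_neg_mul_int_add_sq {c : ℝ} (hc : 0 < c) (b : ℝ) :
    Summable fun n : ℤ ↦ Real.exp (-c * (n + b) ^ 2) := by
  refine (HurwitzKernelBounds.summable_f_int 0 b (div_pos hc Real.pi_pos)).congr fun n ↦ ?_
  rw [HurwitzKernelBounds.f_int, pow_zero, one_mul]
  congr 1
  field_simp

/-- The cross-over probability `P_c` of the virtual binary channel induced by the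
round-modulo operation — i.e. the probability, under the product of two copies of the
Gaussian measure with mean `0` and variance `σ²/2`, that `⌈X⌋ + ⌈Y⌋` is odd — satisfies
`P_c ≤ Σ_{a ∈ ℤ} exp(-(2a + 1/2)²/σ²)`. -/
theorem stmt16 (σ : ℝ) (hσ : 0 < σ) :
    (((gaussianReal 0 (σ ^ 2 / 2).toNNReal).prod (gaussianReal 0 (σ ^ 2 / 2).toNNReal))
        {p : ℝ × ℝ | Odd (round p.1 + round p.2)}).toReal ≤
      ∑' a : ℤ, Real.exp (-(2 * (a : ℝ) + 1 / 2) ^ 2 / σ ^ 2) := by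
  have hv : 0 < σ ^ 2 / 2 := by positivity
  have hsummable : Summable fun a : ℤ ↦ Real.exp (-(2 * (a : ℝ) + 1 / 2) ^ 2 / σ ^ 2) := by
    refine (summable_exp_neg_mul_int_add_sq (c := 4 / σ ^ 2) (by positivity) (1 / 4)).congr
      fun a ↦ ?_
    congr 1
    ring
  calc
    _ ≤ Real.exp (-(1 / 4) / (2 * (σ ^ 2 / 2).toNNReal)) :=
      gaussianReal_prod_real_odd_round_add_le (Real.toNNReal_pos.2 hv).ne'
    _ = Real.exp (-(2 * ((0 : ℤ) : ℝ) + 1 / 2) ^ 2 / σ ^ 2) := by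
      rw [Real.coe_toNNReal _ hv.le, Int.cast_zero]
      congr 1
      ring
    _ ≤ _ := hsummable.le_tsum 0 fun _ _ ↦ (Real.exp_pos _).le

end
end
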